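/- Let μ ≥ 1 be an integer and let p : [0,∞) → ℝ^ℕ be the solution of the mean-field ODE system d/dt p_n(t) = 𝓛[p(t)]_n with p(0) ∈ V_μ and p(t) ∈ V_μ for every t ≥ 0. Then for every t ≥ 0, W₁(p(t), p*) ≤ 2·μ·e^{−t}, where p* is the Poisson distribution with mean μ and W₁ is the Wasserstein-1 distance on ℕ. -/

import Mathlib

open MeasureTheory ENNReal

noncomputable section

/-- The poor-biased generator: `𝓛[p]_0 = p_1 - μ p_0` and, for `n ≥ 1`,
`𝓛[p]_n = (n+1) p_{n+1} + μ p_{n-1} - (n+μ) p_n`. -/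
def gen (μ : ℝ) (p : ℕ → ℝ) : ℕ → ℝ
  | 0 => p 1 - μ * p 0
  | n + 1 => ((n : ℝ) + 2) * p (n + 2) + μ * p n - (((n : ℝ) + 1) + μ) * p (n + 1)

/-- `V_μ`: probability mass functions on `ℕ` with mean `μ`. -/
def memV (μ : ℝ) (p : ℕ → ℝ) : Prop :=
  (∀ n, 0 ≤ p n) ∧ (∑' n : ℕ, p n = 1) ∧ (∑' n : ℕ, (n : ℝ) * p n = μ)

/-- The Wasserstein-1 distance (valued in `ℝ≥0∞`) between two measures on `ℕ`. -/
def W1nat (π₁ π₂ : Measure ℕ) : ℝ≥0∞ :=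
  ⨅ (π : Measure (ℕ × ℕ)) (_ : π.map Prod.fst = π₁) (_ : π.map Prod.snd = π₂),
    ∫⁻ z, (Nat.dist z.1 z.2 : ℝ≥0∞) ∂π

/-- The measure on `ℕ` associated with a (sub-)probability mass function `p`. -/
def seqMeas (p : ℕ → ℝ) : Measure ℕ :=
  Measure.sum (fun n : ℕ => ENNReal.ofReal (p n) • Measure.dirac n)

/-- The Poisson distribution with mean `μ` as a measure on `ℕ`. -/
def poissonMeas (μ : ℝ) : Measure ℕ :=
  seqMeas (fun n => μ ^ n * Real.exp (-μ) / n.factorial)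

/-- Cumulative sums. -/
def cumS (q : ℕ → ℝ) (n : ℕ) : ℝ := ∑ k ∈ Finset.range n, q k

lemma cumS_zero (q : ℕ → ℝ) : cumS q 0 = 0 := by simp [cumS]

lemma cumS_succ (q : ℕ → ℝ) (n : ℕ) : cumS q (n + 1) = cumS q n + q n := by
  simp [cumS, Finset.sum_range_succ]

lemma cumS_mono {q : ℕ → ℝ} (h0 : ∀ n, 0 ≤ q n) : Monotone (cumS q) :=
  monotone_nat_of_le_succ fun n => by rw [cumS_succ]; linarith [h0 n]

lemma cumS_le_one {q : ℕ → ℝ} (h0 : ∀ n, 0 ≤ q n) (h1 : HasSum q 1) (n : ℕ) :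
    cumS q n ≤ 1 := sum_le_hasSum _ (fun i _ => h0 i) h1

lemma tail_markov {q : ℕ → ℝ} {m : ℝ} (h0 : ∀ n, 0 ≤ q n) (h1 : HasSum q 1)
    (h2 : HasSum (fun n : ℕ => (n : ℝ) * q n) m) (N : ℕ) :
    (N : ℝ) * (1 - cumS q (N + 1)) ≤ m - ∑ k ∈ Finset.range (N + 1), (k : ℝ) * q k := by
  have a := ((hasSum_nat_add_iff' (N + 1)).2 h1).mul_left (N : ℝ)
  have b := (hasSum_nat_add_iff' (N + 1)).2 h2
  refine hasSum_le (fun k => ?_) a b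
  refine mul_le_mul_of_nonneg_right ?_ (h0 _)
  push_cast
  have : (0 : ℝ) ≤ k := k.cast_nonneg
  linarith

lemma sum_tails {q : ℕ → ℝ} (N : ℕ) :
    ∑ n ∈ Finset.range N, (1 - cumS q (n + 1))
      = ∑ k ∈ Finset.range (N + 1), (k : ℝ) * q k + N * (1 - cumS q (N + 1)) := by
  induction N with
  | zero => simp
  | succ N ih =>
    rw [Finset.sum_range_succ, ih, Finset.sum_range_succ _ (N + 1), cumS_succ q (N + 1)]
    push_cast
    ring

lemma sum_tails_le {q : ℕ → ℝ} {m : ℝ} (h0 : ∀ n, 0 ≤ q n) (h1 : HasSum q 1)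
    (h2 : HasSum (fun n : ℕ => (n : ℝ) * q n) m) (N : ℕ) :
    ∑ n ∈ Finset.range N, (1 - cumS q (n + 1)) ≤ m := by
  rw [sum_tails]; linarith [tail_markov h0 h1 h2 N]

lemma exists_quantile {q : ℕ → ℝ} (h0 : ∀ n, 0 ≤ q n) (h1 : HasSum q 1) :
    ∃ X : ℝ → ℕ, Measurable X ∧
      ∀ u ∈ Set.Ico (0 : ℝ) 1, ∀ n, n ≤ X u ↔ cumS q n ≤ u := by
  classical
  have hex : ∀ u : ℝ, ∃ n, u < cumS q (n + 1) ∨ 1 ≤ u := by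
    intro u
    by_cases hu : 1 ≤ u
    · exact ⟨0, Or.inr hu⟩
    · have h := (Filter.Tendsto.comp h1.tendsto_sum_nat
        (Filter.tendsto_add_atTop_nat 1)).eventually (lt_mem_nhds (not_le.1 hu))
      obtain ⟨n, hn⟩ := h.exists
      exact ⟨n, Or.inl hn⟩
  refine ⟨fun u => Nat.find (hex u), measurable_find hex fun k => ?_, fun u hu n => ?_⟩
  · exact (measurableSet_lt measurable_id measurable_const).union
      (measurableSet_le measurable_const measurable_id)
  · rw [Nat.le_find_iff]
    constructor
    · intro h
      rcases n with _ | n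
      · rw [cumS_zero]; exact hu.1
      · have := h n (Nat.lt_succ_self n)
        push Not at this
        exact this.1
    · intro h k hk
      push Not
      exact ⟨(cumS_mono h0 hk).trans h, hu.2⟩

lemma seqMeas_singleton (q : ℕ → ℝ) (n : ℕ) : seqMeas q {n} = ENNReal.ofReal (q n) := by
  rw [seqMeas, Measure.sum_apply _ (measurableSet_singleton n), tsum_eq_single n]
  · simp
  · intro k hk
    simp [hk]

lemma map_quantile {q : ℕ → ℝ} (h0 : ∀ n, 0 ≤ q n) (h1 : HasSum q 1) {X : ℝ → ℕ}
    (hX : Measurable X)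
    (h : ∀ u ∈ Set.Ico (0 : ℝ) 1, ∀ n, n ≤ X u ↔ cumS q n ≤ u) :
    (volume.restrict (Set.Ico (0 : ℝ) 1)).map X = seqMeas q := by
  refine Measure.ext_of_singleton fun n => ?_
  rw [seqMeas_singleton, Measure.map_apply hX (measurableSet_singleton n),
    Measure.restrict_apply (hX (measurableSet_singleton n))]
  have : X ⁻¹' {n} ∩ Set.Ico (0 : ℝ) 1 = Set.Ico (cumS q n) (cumS q (n + 1)) := by
    ext u
    constructor
    · rintro ⟨hx, hu⟩
      have hx : X u = n := hx
      refine ⟨(h u hu n).1 hx.ge, ?_⟩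
      by_contra hc
      have := (h u hu (n + 1)).2 (not_lt.1 hc)
      omega
    · intro hu
      have hu' : u ∈ Set.Ico (0 : ℝ) 1 :=
        ⟨(by rw [← cumS_zero q]; exact (cumS_mono h0 n.zero_le).trans hu.1),
          hu.2.trans_le (cumS_le_one h0 h1 _)⟩
      refine ⟨?_, hu'⟩
      have a := (h u hu' n).2 hu.1
      have b : ¬ (n + 1 ≤ X u) := fun hc => (not_lt.2 ((h u hu' (n + 1)).1 hc)) hu.2
      change X u = n
      omega
  rw [this, Real.volume_Ico, cumS_succ]
  congr 1; ring

lemma natDist_eq (a b : ℕ) : Nat.dist a b = (Finset.Ico (min a b) (max a b)).card := by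
  rw [Nat.card_Ico, Nat.dist]; omega

lemma W1_le {q r : ℕ → ℝ} (h0 : ∀ n, 0 ≤ q n) (h1 : HasSum q 1)
    (h0' : ∀ n, 0 ≤ r n) (h1' : HasSum r 1) :
    W1nat (seqMeas q) (seqMeas r)
      ≤ ∑' n, ENNReal.ofReal |cumS q (n + 1) - cumS r (n + 1)| := by
  obtain ⟨X, hXm, hX⟩ := exists_quantile h0 h1
  obtain ⟨Y, hYm, hY⟩ := exists_quantile h0' h1'
  have hm : Measurable fun u => (X u, Y u) := hXm.prodMk hYm
  refine (iInf₂_le_of_le ((volume.restrict (Set.Ico (0 : ℝ) 1)).map fun u => (X u, Y u)) ?_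
    (iInf_le_of_le ?_ ?_))
  · rw [Measure.map_map measurable_fst hm]; exact map_quantile h0 h1 hXm hX
  · rw [Measure.map_map measurable_snd hm]; exact map_quantile h0' h1' hYm hY
  · rw [lintegral_map (measurable_of_countable _) hm]
    let A : ℕ → Set ℝ := fun n => Set.Ico (min (cumS q (n + 1)) (cumS r (n + 1)))
      (max (cumS q (n + 1)) (cumS r (n + 1)))
    have hA : ∀ n, MeasurableSet (A n) := fun n => measurableSet_Ico
    calc ∫⁻ u in Set.Ico (0 : ℝ) 1, (Nat.dist (X u) (Y u) : ℝ≥0∞)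
        ≤ ∫⁻ u in Set.Ico (0 : ℝ) 1, ∑' n, (A n).indicator 1 u := by
          refine setLIntegral_mono' measurableSet_Ico fun u hu => ?_
          have e : (Nat.dist (X u) (Y u) : ℝ≥0∞)
              = ∑ n ∈ Finset.Ico (min (X u) (Y u)) (max (X u) (Y u)),
                  (A n).indicator (1 : ℝ → ℝ≥0∞) u := by
            rw [natDist_eq, Finset.card_eq_sum_ones, Nat.cast_sum]
            refine Finset.sum_congr rfl fun n hn => ?_
            have hmem : u ∈ A n := by
              have e1 := hX u hu (n + 1)
              have e2 := hY u hu (n + 1)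
              simp only [A, Set.mem_Ico, min_le_iff, lt_max_iff]
              rw [← not_le (a := cumS q (n + 1)), ← not_le (a := cumS r (n + 1)), ← e1, ← e2]
              rw [Finset.mem_Ico] at hn
              omega
            simp [hmem]
          rw [e]
          exact ENNReal.sum_le_tsum _
      _ ≤ ∫⁻ u, ∑' n, (A n).indicator 1 u := setLIntegral_le_lintegral _ _
      _ = ∑' n, ∫⁻ u, (A n).indicator 1 u :=
          lintegral_tsum fun n => (measurable_one.indicator (hA n)).aemeasurable
      _ = ∑' n, ENNReal.ofReal |cumS q (n + 1) - cumS r (n + 1)| := by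
          congr 1; ext n
          rw [lintegral_indicator_one (hA n), Real.volume_Ico, max_sub_min_eq_abs, abs_sub_comm]

lemma memV_hasSum {m : ℝ} (hm : m ≠ 0) {q : ℕ → ℝ} (h : memV m q) :
    (∀ n, 0 ≤ q n) ∧ HasSum q 1 ∧ HasSum (fun n : ℕ => (n : ℝ) * q n) m := by
  obtain ⟨h0, h1, h2⟩ := h
  refine ⟨h0, ?_, ?_⟩
  · have : Summable q := by
      by_contra hc
      rw [tsum_eq_zero_of_not_summable hc] at h1
      exact zero_ne_one h1
    rw [← h1]; exact this.hasSum
  · have : Summable (fun n : ℕ => (n : ℝ) * q n) := by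
      by_contra hc
      rw [tsum_eq_zero_of_not_summable hc] at h2
      exact hm h2.symm
    rw [← h2]; exact this.hasSum

/-- The Poisson weights. -/
def poi (m : ℝ) (n : ℕ) : ℝ := m ^ n * Real.exp (-m) / n.factorial

lemma poi_nonneg {m : ℝ} (hm : 0 ≤ m) (n : ℕ) : 0 ≤ poi m n := by
  unfold poi; positivity

lemma poi_rec (m : ℝ) (n : ℕ) : ((n : ℝ) + 1) * poi m (n + 1) = m * poi m n := by
  unfold poi
  rw [Nat.factorial_succ]
  have : (n.factorial : ℝ) ≠ 0 := by positivity
  push_cast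
  field_simp
  ring

lemma poi_hasSum {m : ℝ} (hm : 0 ≤ m) : HasSum (poi m) 1 := by
  have := ProbabilityTheory.hasSum_one_poissonMeasure ⟨m, hm⟩
  convert this using 2 with n
  change m ^ n * Real.exp (-m) / n.factorial = Real.exp (-m) * m ^ n / n.factorial
  ring

lemma poi_hasSum_mean {m : ℝ} (hm : 0 ≤ m) : HasSum (fun n : ℕ => (n : ℝ) * poi m n) m := by
  rw [← hasSum_nat_add_iff' 1]
  have := (poi_hasSum hm).mul_left m
  simp only [← poi_rec] at this
  simpa using this

/-- Smoothed absolute value. -/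
def sab (ε x : ℝ) : ℝ := Real.sqrt (x ^ 2 + ε ^ 2)

lemma abs_le_sab (ε x : ℝ) : |x| ≤ sab ε x :=
  Real.abs_le_sqrt (by nlinarith [sq_nonneg ε])

lemma sab_le {ε : ℝ} (hε : 0 ≤ ε) (x : ℝ) : sab ε x ≤ |x| + ε := by
  refine Real.sqrt_le_iff.2 ⟨by positivity, ?_⟩
  nlinarith [sq_abs x, abs_nonneg x, mul_nonneg (abs_nonneg x) hε]

lemma sab_zero {ε : ℝ} (hε : 0 ≤ ε) : sab ε 0 = ε := by
  simp [sab, Real.sqrt_sq hε]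

lemma sab_ge {ε : ℝ} (hε : 0 ≤ ε) (x : ℝ) : ε ≤ sab ε x :=
  Real.le_sqrt_of_sq_le (by nlinarith [sq_nonneg x])

lemma sab_pos {ε : ℝ} (hε : 0 < ε) (x : ℝ) : 0 < sab ε x := hε.trans_le (sab_ge hε.le x)

lemma sab_convex {ε : ℝ} (hε : 0 < ε) (x y : ℝ) :
    x / sab ε x * (y - x) ≤ sab ε y - sab ε x := by
  have hx := sab_pos hε x
  have hy := sab_pos hε y
  have sx : sab ε x ^ 2 = x ^ 2 + ε ^ 2 := Real.sq_sqrt (by positivity)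
  have sy : sab ε y ^ 2 = y ^ 2 + ε ^ 2 := Real.sq_sqrt (by positivity)
  have key : x * y + ε ^ 2 ≤ sab ε x * sab ε y := by
    refine abs_le_of_sq_le_sq' ?_ (by positivity) |>.2
    rw [mul_pow, sx, sy]
    nlinarith [sq_nonneg (ε * (x - y))]
  rw [div_mul_eq_mul_div, div_le_iff₀ hx]
  nlinarith

lemma sab_hasDeriv {ε : ℝ} (hε : 0 < ε) {f : ℝ → ℝ} {f' : ℝ} {s : Set ℝ} {t : ℝ}
    (h : HasDerivWithinAt f f' s t) :
    HasDerivWithinAt (fun u => sab ε (f u)) (f t / sab ε (f t) * f') s t := by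
  have h1 := ((h.pow 2).add_const (ε ^ 2)).sqrt (by simp; positivity)
  have h2 : √((f ^ 2) t + ε ^ 2) = sab ε (f t) := rfl
  change HasDerivWithinAt (fun u => sab ε (f u)) _ s t at h1
  rw [h2] at h1
  convert h1 using 1
  have := sab_pos hε (f t)
  push_cast
  field_simp

lemma telesc (m : ℝ) (φ : ℕ → ℝ) (N : ℕ) :
    ∑ n ∈ Finset.range N, (((n : ℝ) + 1) * (φ (n + 2) - φ (n + 1)) - m * (φ (n + 1) - φ n))
      = - ∑ n ∈ Finset.range N, φ (n + 1) + N * φ (N + 1) - m * (φ N - φ 0) := by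
  induction N with
  | zero => simp
  | succ N ih =>
    rw [Finset.sum_range_succ, ih, Finset.sum_range_succ]
    push_cast
    ring

lemma cumS_gen (m : ℝ) (q : ℕ → ℝ) (n : ℕ) :
    cumS (gen m q) (n + 1) = ((n : ℝ) + 1) * q (n + 1) - m * q n := by
  induction n with
  | zero => simp [cumS, gen]
  | succ n ih =>
    rw [cumS_succ, ih]
    simp only [gen]
    push_cast
    ring

/-- The finite-`N` differential inequality, integrated. -/
lemma finite_bound {m : ℝ} (hm : 0 ≤ m) (E : ℕ → ℝ → ℝ) (hE0 : ∀ t, E 0 t = 0)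
    (hE : ∀ n, ∀ t ∈ Set.Ici (0 : ℝ), HasDerivWithinAt (E (n + 1))
      (((n : ℝ) + 1) * (E (n + 2) t - E (n + 1) t) - m * (E (n + 1) t - E n t)) (Set.Ici 0) t)
    {ε : ℝ} (hε : 0 < ε) (N : ℕ) {t : ℝ} (ht : 0 ≤ t) :
    Real.exp t * ∑ n ∈ Finset.range N, sab ε (E (n + 1) t)
      - ∑ n ∈ Finset.range N, sab ε (E (n + 1) 0)
      ≤ ∫ s in (0 : ℝ)..t, Real.exp s * (N * sab ε (E (N + 1) s)) := by
  have hc : ∀ n, ContinuousOn (E (n + 1)) (Set.Ici 0) := fun n s hs =>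
    (hE n s hs).continuousWithinAt
  have hd : ∀ s ∈ Set.Ici (0 : ℝ), HasDerivWithinAt
      (fun u => Real.exp u * ∑ n ∈ Finset.range N, sab ε (E (n + 1) u))
      (Real.exp s * ∑ n ∈ Finset.range N, sab ε (E (n + 1) s)
        + Real.exp s * ∑ n ∈ Finset.range N, (E (n + 1) s / sab ε (E (n + 1) s) *
          (((n : ℝ) + 1) * (E (n + 2) s - E (n + 1) s) - m * (E (n + 1) s - E n s))))
      (Set.Ici 0) s := fun s hs =>
    (Real.hasDerivAt_exp s).hasDerivWithinAt.mul
      (HasDerivWithinAt.fun_sum fun n _ => sab_hasDeriv hε (hE n s hs))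
  have hmain := intervalIntegral.sub_le_integral_of_hasDeriv_right_of_le (a := 0) (b := t)
    (g := fun u => Real.exp u * ∑ n ∈ Finset.range N, sab ε (E (n + 1) u))
    (φ := fun s => Real.exp s * (N * sab ε (E (N + 1) s))) ht
    (fun s hs => ((hd s hs.1).continuousWithinAt.mono Set.Icc_subset_Ici_self))
    (fun s hs => (hd s hs.1.le).mono (fun u hu => hs.1.le.trans (le_of_lt hu)))
    ?_ ?_
  · simpa using hmain
  · apply ContinuousOn.integrableOn_Icc
    have := (hc N).mono (Set.Icc_subset_Ici_self : Set.Icc 0 t ⊆ _)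
    unfold sab
    fun_prop
  · intro s hs
    rw [← mul_add]
    refine mul_le_mul_of_nonneg_left ?_ (Real.exp_pos s).le
    have h1 : ∑ n ∈ Finset.range N, (E (n + 1) s / sab ε (E (n + 1) s) *
          (((n : ℝ) + 1) * (E (n + 2) s - E (n + 1) s) - m * (E (n + 1) s - E n s)))
        ≤ ∑ n ∈ Finset.range N, (((n : ℝ) + 1) * (sab ε (E (n + 2) s) - sab ε (E (n + 1) s))
          - m * (sab ε (E (n + 1) s) - sab ε (E n s))) := by
      refine Finset.sum_le_sum fun n _ => ?_
      have a := mul_le_mul_of_nonneg_left (sab_convex hε (E (n + 1) s) (E (n + 2) s))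
        (by positivity : (0 : ℝ) ≤ (n : ℝ) + 1)
      have b := mul_le_mul_of_nonneg_left (sab_convex hε (E (n + 1) s) (E n s)) hm
      linarith
    rw [telesc m (fun n => sab ε (E n s)) N] at h1
    have h2 : sab ε (E 0 s) ≤ sab ε (E N s) := by
      rw [hE0, sab_zero hε.le]; exact sab_ge hε.le _
    have h3 := mul_nonneg hm (sub_nonneg.2 h2)
    linarith

/-- Bounds on weighted tails of the difference. -/
lemma tail_diff {q r : ℕ → ℝ} {m : ℝ} (h0 : ∀ n, 0 ≤ q n) (h1 : HasSum q 1)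
    (h2 : HasSum (fun n : ℕ => (n : ℝ) * q n) m) (h0' : ∀ n, 0 ≤ r n) (h1' : HasSum r 1)
    (h2' : HasSum (fun n : ℕ => (n : ℝ) * r n) m) (N : ℕ) :
    (N : ℝ) * |cumS q (N + 1) - cumS r (N + 1)|
      ≤ (m - ∑ k ∈ Finset.range (N + 1), (k : ℝ) * q k)
        + (m - ∑ k ∈ Finset.range (N + 1), (k : ℝ) * r k) := by
  have a := tail_markov h0 h1 h2 N
  have b := tail_markov h0' h1' h2' N
  have c : |cumS q (N + 1) - cumS r (N + 1)|
      ≤ (1 - cumS q (N + 1)) + (1 - cumS r (N + 1)) := by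
    have := cumS_le_one h0 h1 (N + 1)
    have := cumS_le_one h0' h1' (N + 1)
    rw [abs_le]; constructor <;> linarith
  have := mul_le_mul_of_nonneg_left c (N.cast_nonneg : (0 : ℝ) ≤ N)
  linarith

lemma sum_diff_le {q r : ℕ → ℝ} {m : ℝ} (h0 : ∀ n, 0 ≤ q n) (h1 : HasSum q 1)
    (h2 : HasSum (fun n : ℕ => (n : ℝ) * q n) m) (h0' : ∀ n, 0 ≤ r n) (h1' : HasSum r 1)
    (h2' : HasSum (fun n : ℕ => (n : ℝ) * r n) m) (N : ℕ) :
    ∑ n ∈ Finset.range N, |cumS q (n + 1) - cumS r (n + 1)| ≤ 2 * m := by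
  have a := sum_tails_le h0 h1 h2 N
  have b := sum_tails_le h0' h1' h2' N
  have c : ∑ n ∈ Finset.range N, |cumS q (n + 1) - cumS r (n + 1)|
      ≤ ∑ n ∈ Finset.range N, ((1 - cumS q (n + 1)) + (1 - cumS r (n + 1))) := by
    refine Finset.sum_le_sum fun n _ => ?_
    have := cumS_le_one h0 h1 (n + 1)
    have := cumS_le_one h0' h1' (n + 1)
    rw [abs_le]; constructor <;> linarith
  rw [Finset.sum_add_distrib] at c
  linarith

lemma tail_diff_tendsto {q r : ℕ → ℝ} {m : ℝ} (h0 : ∀ n, 0 ≤ q n) (h1 : HasSum q 1)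
    (h2 : HasSum (fun n : ℕ => (n : ℝ) * q n) m) (h0' : ∀ n, 0 ≤ r n) (h1' : HasSum r 1)
    (h2' : HasSum (fun n : ℕ => (n : ℝ) * r n) m) :
    Filter.Tendsto (fun N : ℕ => (N : ℝ) * |cumS q (N + 1) - cumS r (N + 1)|)
      Filter.atTop (nhds 0) := by
  have l1 := (Filter.Tendsto.comp h2.tendsto_sum_nat (Filter.tendsto_add_atTop_nat 1)).const_sub m
  have l2 := (Filter.Tendsto.comp h2'.tendsto_sum_nat
    (Filter.tendsto_add_atTop_nat 1)).const_sub m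
  have l := l1.add l2
  rw [sub_self, add_zero] at l
  exact squeeze_zero (fun N => by positivity) (tail_diff h0 h1 h2 h0' h1' h2') l

lemma partial_bound {m : ℝ} (hm : 0 < m) (p : ℝ → ℕ → ℝ)
    (hode : ∀ t ∈ Set.Ici (0 : ℝ), ∀ n : ℕ,
      HasDerivWithinAt (fun s => p s n) (gen m (p t) n) (Set.Ici 0) t)
    (hV : ∀ t ∈ Set.Ici (0 : ℝ), memV m (p t)) {t : ℝ} (ht : 0 ≤ t) (M : ℕ) :
    Real.exp t * ∑ n ∈ Finset.range M, |cumS (p t) (n + 1) - cumS (poi m) (n + 1)| ≤ 2 * m := by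
  have hq := fun s (hs : s ∈ Set.Ici (0 : ℝ)) => memV_hasSum hm.ne' (hV s hs)
  have g0 := poi_nonneg hm.le
  have g1 := poi_hasSum hm.le
  have g2 := poi_hasSum_mean hm.le
  set E : ℕ → ℝ → ℝ := fun n s => cumS (p s) n - cumS (poi m) n with hEdef
  have hE0 : ∀ s, E 0 s = 0 := fun s => by simp [hEdef, cumS_zero]
  have hE : ∀ n, ∀ s ∈ Set.Ici (0 : ℝ), HasDerivWithinAt (E (n + 1))
      (((n : ℝ) + 1) * (E (n + 2) s - E (n + 1) s) - m * (E (n + 1) s - E n s))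
      (Set.Ici 0) s := by
    intro n s hs
    have h : HasDerivWithinAt (E (n + 1)) (cumS (gen m (p s)) (n + 1)) (Set.Ici 0) s :=
      (HasDerivWithinAt.fun_sum fun k _ => hode s hs k).sub_const _
    convert h using 1
    rw [cumS_gen]
    simp only [hEdef, cumS_succ _ (n + 1), cumS_succ _ n]
    linear_combination -(poi_rec m n)
  have hcE : ∀ n, ContinuousOn (E (n + 1)) (Set.Ici 0) := fun n s hs =>
    (hE n s hs).continuousWithinAt
  let ε : ℕ → ℝ := fun N => 1 / ((N : ℝ) + 1) ^ 2
  have hε : ∀ N, 0 < ε N := fun N => by positivity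
  have hNε : ∀ N : ℕ, (N : ℝ) * ε N ≤ 1 / ((N : ℝ) + 1) := fun N => by
    simp only [ε]
    rw [mul_one_div, div_le_div_iff₀ (by positivity) (by positivity)]
    have : (0 : ℝ) ≤ N := N.cast_nonneg
    nlinarith
  have hNε1 : ∀ N : ℕ, (N : ℝ) * ε N ≤ 1 := fun N => (hNε N).trans (by
    rw [div_le_one (by positivity)]
    have : (0 : ℝ) ≤ N := N.cast_nonneg
    linarith)
  have hNε0 : Filter.Tendsto (fun N : ℕ => (N : ℝ) * ε N) Filter.atTop (nhds 0) :=
    squeeze_zero (fun N => mul_nonneg N.cast_nonneg (hε N).le) hNε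
      tendsto_one_div_add_atTop_nhds_zero_nat
  have hsab : ∀ (N : ℕ) (s : ℝ), (N : ℝ) * sab (ε N) (E (N + 1) s) ≤ N * |E (N + 1) s| + N * ε N :=
    fun N s => by
      rw [← mul_add]; exact mul_le_mul_of_nonneg_left (sab_le (hε N).le _) N.cast_nonneg
  have hsab0 : ∀ (N : ℕ) (s : ℝ), 0 ≤ (N : ℝ) * sab (ε N) (E (N + 1) s) :=
    fun N s => mul_nonneg N.cast_nonneg (sab_pos (hε N) _).le
  have hI : Filter.Tendsto (fun N : ℕ => ∫ s in (0 : ℝ)..t,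
      Real.exp s * (N * sab (ε N) (E (N + 1) s))) Filter.atTop
      (nhds (∫ s in (0 : ℝ)..t, (0 : ℝ))) := by
    refine intervalIntegral.tendsto_integral_filter_of_dominated_convergence
      (fun s => Real.exp s * (2 * m + 1)) ?_ ?_ ?_ ?_
    · refine Filter.Eventually.of_forall fun N => ?_
      rw [Set.uIoc_of_le ht]
      refine ContinuousOn.aestronglyMeasurable ?_ measurableSet_Ioc
      have := (hcE N).mono (fun s hs => hs.1.le : Set.Ioc 0 t ⊆ Set.Ici 0)
      unfold sab
      fun_prop
    · refine Filter.Eventually.of_forall fun N => Filter.Eventually.of_forall fun s hs => ?_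
      rw [Set.uIoc_of_le ht] at hs
      obtain ⟨a0, a1, a2⟩ := hq s hs.1.le
      rw [Real.norm_of_nonneg (mul_nonneg (Real.exp_pos s).le (hsab0 N s))]
      refine mul_le_mul_of_nonneg_left ?_ (Real.exp_pos s).le
      have b1 := tail_diff a0 a1 a2 g0 g1 g2 N
      have b2 : 0 ≤ ∑ k ∈ Finset.range (N + 1), (k : ℝ) * p s k :=
        Finset.sum_nonneg fun k _ => mul_nonneg k.cast_nonneg (a0 k)
      have b3 : 0 ≤ ∑ k ∈ Finset.range (N + 1), (k : ℝ) * poi m k :=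
        Finset.sum_nonneg fun k _ => mul_nonneg k.cast_nonneg (g0 k)
      have b4 := hsab N s
      have b5 := hNε1 N
      simp only [hEdef] at b4 ⊢
      linarith
    · exact Continuous.intervalIntegrable (by fun_prop) _ _
    · refine Filter.Eventually.of_forall fun s hs => ?_
      rw [Set.uIoc_of_le ht] at hs
      obtain ⟨a0, a1, a2⟩ := hq s hs.1.le
      have l := (tail_diff_tendsto a0 a1 a2 g0 g1 g2).add hNε0
      rw [add_zero] at l
      have := (squeeze_zero (fun N => hsab0 N s) (fun N => hsab N s) l).const_mul (Real.exp s)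
      rwa [mul_zero] at this
  rw [intervalIntegral.integral_zero] at hI
  have hlim := (hNε0.const_add (2 * m)).add hI
  rw [add_zero, add_zero] at hlim
  refine ge_of_tendsto hlim ?_
  filter_upwards [Filter.eventually_ge_atTop M] with N hN
  have hfb := finite_bound hm.le E hE0 hE (hε N) N ht
  obtain ⟨a0, a1, a2⟩ := hq 0 (le_refl (0 : ℝ))
  have c1 : ∑ n ∈ Finset.range N, sab (ε N) (E (n + 1) 0) ≤ 2 * m + N * ε N := by
    calc _ ≤ ∑ n ∈ Finset.range N, (|E (n + 1) 0| + ε N) :=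
          Finset.sum_le_sum fun n _ => sab_le (hε N).le _
      _ = ∑ n ∈ Finset.range N, |E (n + 1) 0| + N * ε N := by
          rw [Finset.sum_add_distrib]; simp
      _ ≤ _ := by
          have := sum_diff_le a0 a1 a2 g0 g1 g2 N
          simp only [hEdef]
          linarith
  have c2 : ∑ n ∈ Finset.range M, |E (n + 1) t| ≤
      ∑ n ∈ Finset.range N, sab (ε N) (E (n + 1) t) :=
    (Finset.sum_le_sum fun n _ => abs_le_sab (ε N) _).trans
      (Finset.sum_le_sum_of_subset_of_nonneg (Finset.range_mono hN)
        fun n _ _ => (sab_pos (hε N) _).le)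
  have c3 := mul_le_mul_of_nonneg_left c2 (Real.exp_pos t).le
  linarith

/-- Equilibration of the mean-field ODE towards the Poisson distribution:
`W₁(p(t), p*) ≤ 2 μ e^{-t}`. -/
theorem meanfield_convergence_to_poisson (μ : ℕ) (hμ : 1 ≤ μ) (p : ℝ → ℕ → ℝ)
    (hode : ∀ t ∈ Set.Ici (0 : ℝ), ∀ n : ℕ,
      HasDerivWithinAt (fun s => p s n) (gen μ (p t) n) (Set.Ici 0) t)
    (hV : ∀ t ∈ Set.Ici (0 : ℝ), memV μ (p t)) :
    ∀ t ∈ Set.Ici (0 : ℝ),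
      W1nat (seqMeas (p t)) (poissonMeas μ) ≤ ENNReal.ofReal (2 * μ * Real.exp (-t)) := by
  intro t ht
  have hm : (0 : ℝ) < μ := by exact_mod_cast hμ
  obtain ⟨a0, a1, a2⟩ := memV_hasSum hm.ne' (hV t ht)
  have hW := W1_le a0 a1 (poi_nonneg hm.le) (poi_hasSum hm.le)
  refine hW.trans (ENNReal.tsum_le_of_sum_range_le fun M => ?_)
  rw [← ENNReal.ofReal_sum_of_nonneg fun n _ => abs_nonneg _]
  refine ENNReal.ofReal_le_ofReal ?_
  have h := partial_bound hm p hode hV ht M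
  rw [Real.exp_neg, ← div_eq_mul_inv, le_div_iff₀ (Real.exp_pos t), mul_comm]
  exact h

end
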